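/- Let A ≥ 1, let m ≥ 1 be an integer, and define φ(x) = 2A arctan(e^{x/A}). Then for all x ∈ ℝ, |(φ^m)'''(x)| ≤ 5 m² A^{−2} (φ^m)'(x), where φ^m denotes the m-th pointwise power of φ. In particular, for every β > 0 and every m, if A is large enough (depending on m and β) then |(φ^m)'''| ≤ 2^{−9} β (φ^m)' on ℝ. -/

import Mathlib

/-!
The function `φ = 2A arctan(e^{x/A})` solves `φ' = sin (φ / A)`. Hence, with `s = sin (φ / A)`,
`c = cos (φ / A)` and `n = m - 1`,
`(φ^m)' = m φ^n s` and
`(φ^m)''' = m s (n(n-1) φ^{n-2} s² + 3n A⁻¹ φ^{n-1} s c + A⁻² φ^n (c² - s²))`.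
Since `|s| ≤ |φ| / A`, the parenthesis is at most `(n(n-1) + 3n + 1) A⁻² |φ|^n = m² A⁻² |φ|^n`.
The constant `m²` is optimal: as `x → -∞`, `φ → 0`, so `s / φ → A⁻¹` and `c → 1`, and all the terms
add up.
-/

open Real

section PowBounds

variable {R : Type*} [CommRing R] [LinearOrder R] [IsStrictOrderedRing R] {a b c : R}

theorem natCast_mul_abs_pow_pred_mul_le (h : |b| ≤ c * |a|) (n : ℕ) :
    n * |a ^ (n - 1) * b| ≤ n * (c * |a| ^ n) := by
  cases n with
  | zero => simp
  | succ k =>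
    gcongr
    calc |a ^ (k + 1 - 1) * b| = |a| ^ k * |b| := by rw [abs_mul, abs_pow, Nat.add_sub_cancel]
      _ ≤ |a| ^ k * (c * |a|) := by gcongr
      _ = c * |a| ^ (k + 1) := by ring

theorem natCast_mul_pred_mul_abs_pow_mul_sq_le (h : |b| ≤ c * |a|) (n : ℕ) :
    n * ((n - 1 : ℕ) * |a ^ (n - 2) * b ^ 2|) ≤ n * ((n - 1 : ℕ) * (c ^ 2 * |a| ^ n)) := by
  match n with
  | 0 | 1 => simp
  | k + 2 =>
    gcongr
    calc |a ^ (k + 2 - 2) * b ^ 2| = |a| ^ k * |b| ^ 2 := by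
          rw [abs_mul, abs_pow, abs_pow, Nat.add_sub_cancel]
      _ ≤ |a| ^ k * (c * |a|) ^ 2 := by gcongr
      _ = c ^ 2 * |a| ^ (k + 2) := by ring

end PowBounds

/-- `φ` is a global solution of the autonomous equation `φ' = sin (ω φ)`. -/
def SolvesSineODE (ω : ℝ) (φ : ℝ → ℝ) : Prop :=
  ∀ x, HasDerivAt φ (sin (ω * φ x)) x

namespace SolvesSineODE

/-- The factor `Q` in `(φ^(n+1))''' = (n+1) sin (ω φ) Q(φ)` for a solution of `φ' = sin (ω φ)`.
The truncated exponents `n - 1` and `n - 2` are harmless: their terms vanish whenever truncation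
occurs. -/
noncomputable def thirdDerivCofactor (ω : ℝ) (n : ℕ) (a : ℝ) : ℝ :=
  n * ((n - 1 : ℕ) * (a ^ (n - 2) * sin (ω * a) ^ 2))
    + 3 * ω * (n * (a ^ (n - 1) * sin (ω * a))) * cos (ω * a)
    + ω ^ 2 * a ^ n * cos (2 * (ω * a))

theorem abs_thirdDerivCofactor_le (ω : ℝ) (n : ℕ) (a : ℝ) :
    |thirdDerivCofactor ω n a| ≤ (n + 1) ^ 2 * ω ^ 2 * |a| ^ n := by
  have hsin : |sin (ω * a)| ≤ |ω| * |a| := abs_sin_le_abs.trans_eq (abs_mul ω a)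
  have hlin : n * |a ^ (n - 1) * sin (ω * a)| ≤ n * (|ω| * |a| ^ n) :=
    natCast_mul_abs_pow_pred_mul_le hsin n
  have hquad : |n * ((n - 1 : ℕ) * (a ^ (n - 2) * sin (ω * a) ^ 2))|
      ≤ n * (n - 1 : ℕ) * (ω ^ 2 * |a| ^ n) := by
    rw [abs_mul, abs_mul, Nat.abs_cast, Nat.abs_cast, mul_assoc, ← sq_abs ω]
    exact natCast_mul_pred_mul_abs_pow_mul_sq_le hsin n
  have hmixed : |3 * ω * (n * (a ^ (n - 1) * sin (ω * a))) * cos (ω * a)|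
      ≤ 3 * n * (ω ^ 2 * |a| ^ n) := by
    calc |3 * ω * (n * (a ^ (n - 1) * sin (ω * a))) * cos (ω * a)|
        = 3 * |ω| * (n * |a ^ (n - 1) * sin (ω * a)|) * |cos (ω * a)| := by
          simp only [abs_mul, Nat.abs_cast, Nat.abs_ofNat]
      _ ≤ 3 * |ω| * (n * (|ω| * |a| ^ n)) * 1 := by gcongr; exact abs_cos_le_one _
      _ = 3 * n * (ω ^ 2 * |a| ^ n) := by rw [← sq_abs ω]; ring
  have hlast : |ω ^ 2 * a ^ n * cos (2 * (ω * a))| ≤ ω ^ 2 * |a| ^ n := by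
    rw [abs_mul, abs_mul, abs_sq, abs_pow]
    exact mul_le_of_le_one_right (by positivity) (abs_cos_le_one _)
  have hcoeff : (n : ℝ) * (n - 1 : ℕ) + 3 * n + 1 = (n + 1) ^ 2 := by
    cases n <;> push_cast [Nat.add_sub_cancel] <;> ring
  calc |thirdDerivCofactor ω n a| ≤ _ := abs_add_three _ _ _
    _ ≤ n * (n - 1 : ℕ) * (ω ^ 2 * |a| ^ n) + 3 * n * (ω ^ 2 * |a| ^ n) + ω ^ 2 * |a| ^ n := by
      gcongr
    _ = (n + 1) ^ 2 * ω ^ 2 * |a| ^ n := by rw [← hcoeff]; ring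

variable {φ : ℝ → ℝ} {ω : ℝ}

theorem hasDerivAt_pow_succ (hφ : SolvesSineODE ω φ) (n : ℕ) (x : ℝ) :
    HasDerivAt (fun y ↦ φ y ^ (n + 1)) ((n + 1) * (φ x ^ n * sin (ω * φ x))) x := by
  refine ((hφ x).pow (n + 1)).congr_deriv ?_
  push_cast [Nat.add_sub_cancel]
  ring

theorem hasDerivAt_pow_mul_sin (hφ : SolvesSineODE ω φ) (n : ℕ) (x : ℝ) :
    HasDerivAt (fun y ↦ φ y ^ n * sin (ω * φ y))
      (n * (φ x ^ (n - 1) * sin (ω * φ x) ^ 2)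
        + ω * (φ x ^ n * (sin (ω * φ x) * cos (ω * φ x)))) x := by
  refine (((hφ x).pow n).mul ((hφ x).const_mul ω).sin).congr_deriv ?_
  simp only [Pi.pow_apply]
  ring

theorem deriv_pow_succ (hφ : SolvesSineODE ω φ) (n : ℕ) :
    deriv (fun y ↦ φ y ^ (n + 1)) = fun y ↦ (n + 1) * (φ y ^ n * sin (ω * φ y)) :=
  deriv_eq (hφ.hasDerivAt_pow_succ n)

theorem deriv_deriv_pow_succ (hφ : SolvesSineODE ω φ) (n : ℕ) :
    deriv (deriv fun y ↦ φ y ^ (n + 1)) = fun y ↦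
      (n + 1) * (n * (φ y ^ (n - 1) * sin (ω * φ y) ^ 2)
        + ω * (φ y ^ n * (sin (ω * φ y) * cos (ω * φ y)))) := by
  rw [hφ.deriv_pow_succ]
  exact deriv_eq fun y ↦ (hφ.hasDerivAt_pow_mul_sin n y).const_mul _

theorem deriv_deriv_deriv_pow_succ (hφ : SolvesSineODE ω φ) (n : ℕ) (x : ℝ) :
    deriv (deriv (deriv fun y ↦ φ y ^ (n + 1))) x =
      (n + 1) * sin (ω * φ x) * thirdDerivCofactor ω n (φ x) := by
  have hsin := ((hφ x).const_mul ω).sin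
  have hcos := ((hφ x).const_mul ω).cos
  have hderiv := (((((hφ x).pow (n - 1)).mul (hsin.pow 2)).const_mul (n : ℝ)).add
    ((((hφ x).pow n).mul (hsin.mul hcos)).const_mul ω)).const_mul ((n : ℝ) + 1)
  rw [hφ.deriv_deriv_pow_succ]
  refine hderiv.deriv.trans ?_
  simp only [thirdDerivCofactor, Pi.pow_apply, Pi.mul_apply, cos_two_mul', Nat.sub_sub,
    Nat.reduceAdd]
  push_cast
  ring

theorem abs_deriv_deriv_deriv_pow_le (hφ : SolvesSineODE ω φ) (m : ℕ) (x : ℝ) :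
    |deriv (deriv (deriv fun y ↦ φ y ^ m)) x|
      ≤ m ^ 2 * ω ^ 2 * |deriv (fun y ↦ φ y ^ m) x| := by
  cases m with
  | zero => simp
  | succ n =>
    rw [hφ.deriv_deriv_deriv_pow_succ, hφ.deriv_pow_succ, abs_mul]
    calc |(n + 1) * sin (ω * φ x)| * |thirdDerivCofactor ω n (φ x)|
        ≤ |(n + 1) * sin (ω * φ x)| * ((n + 1) ^ 2 * ω ^ 2 * |φ x| ^ n) := by
          gcongr; exact abs_thirdDerivCofactor_le ω n (φ x)
      _ = (n + 1 : ℕ) ^ 2 * ω ^ 2 * |(n + 1) * (φ x ^ n * sin (ω * φ x))| := by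
          simp only [abs_mul, abs_pow]; push_cast; ring

end SolvesSineODE

theorem sin_two_mul_arctan (t : ℝ) : sin (2 * arctan t) = 2 * t / (1 + t ^ 2) :=
  calc sin (2 * arctan t)
      = 2 * (tan (arctan t) * cos (arctan t)) * cos (arctan t) := by
        rw [sin_two_mul, tan_mul_cos (cos_arctan_pos t).ne']
    _ = 2 * t * cos (arctan t) ^ 2 := by rw [tan_arctan]; ring
    _ = 2 * t / (1 + t ^ 2) := by rw [cos_sq_arctan]; ring

/-- The function `φ(x) = 2A arctan(e^{x/A})`, which is `A (gd (x/A) + π/2)` for the Gudermannian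
function `gd`. -/
noncomputable def shiftedGudermannian (A x : ℝ) : ℝ := 2 * A * arctan (exp (x / A))

namespace shiftedGudermannian

variable {A : ℝ}

theorem solvesSineODE (hA : A ≠ 0) : SolvesSineODE A⁻¹ (shiftedGudermannian A) := fun x ↦ by
  have hangle : A⁻¹ * shiftedGudermannian A x = 2 * arctan (exp (x / A)) := by
    unfold shiftedGudermannian; field_simp
  rw [hangle, sin_two_mul_arctan]
  refine ((((hasDerivAt_id x).div_const A).exp.arctan).const_mul (2 * A)).congr_deriv ?_
  simp only [id]
  field_simp

theorem nonneg (hA : 0 ≤ A) (x : ℝ) : 0 ≤ shiftedGudermannian A x :=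
  mul_nonneg (by positivity) (arctan_nonneg.2 (exp_pos _).le)

theorem monotone (hA : 0 ≤ A) : Monotone (shiftedGudermannian A) := fun x y hxy ↦ by
  unfold shiftedGudermannian
  gcongr

theorem deriv_pow_nonneg (hA : 0 ≤ A) (m : ℕ) (x : ℝ) :
    0 ≤ deriv (fun y ↦ shiftedGudermannian A y ^ m) x :=
  Monotone.deriv_nonneg fun _ _ h ↦ pow_le_pow_left₀ (nonneg hA _) (monotone hA h) m

theorem abs_deriv_deriv_deriv_pow_le (hA : 0 < A) (m : ℕ) (x : ℝ) :
    |deriv (deriv (deriv fun y ↦ shiftedGudermannian A y ^ m)) x|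
      ≤ m ^ 2 / A ^ 2 * deriv (fun y ↦ shiftedGudermannian A y ^ m) x := by
  have h := (solvesSineODE hA.ne').abs_deriv_deriv_deriv_pow_le m x
  rwa [abs_of_nonneg (deriv_pow_nonneg hA.le m x), inv_pow, ← div_eq_mul_inv] at h

end shiftedGudermannian

theorem stmt_11_general (m : ℕ) :
    (∀ A : ℝ, 0 < A → ∀ x : ℝ,
      |deriv (deriv (deriv fun y ↦ shiftedGudermannian A y ^ m)) x|
        ≤ m ^ 2 / A ^ 2 * deriv (fun y ↦ shiftedGudermannian A y ^ m) x) ∧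
    (∀ ε : ℝ, 0 < ε → ∃ A₀ : ℝ, 1 ≤ A₀ ∧ ∀ A : ℝ, A₀ ≤ A → ∀ x : ℝ,
      |deriv (deriv (deriv fun y ↦ shiftedGudermannian A y ^ m)) x|
        ≤ ε * deriv (fun y ↦ shiftedGudermannian A y ^ m) x) := by
  refine ⟨fun A hA ↦ shiftedGudermannian.abs_deriv_deriv_deriv_pow_le hA m, fun ε hε ↦
    ⟨max 1 (m ^ 2 / ε), le_max_left _ _, fun A hA x ↦ ?_⟩⟩
  have hA1 : 1 ≤ A := (le_max_left _ _).trans hA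
  have hA0 : 0 < A := one_pos.trans_le hA1
  have hsq : m ^ 2 / ε ≤ A ^ 2 :=
    calc m ^ 2 / ε ≤ A := (le_max_right _ _).trans hA
      _ ≤ A ^ 2 := le_self_pow₀ hA1 two_ne_zero
  have hconst : m ^ 2 / A ^ 2 ≤ ε := (div_le_comm₀ hε (by positivity)).1 hsq
  exact (shiftedGudermannian.abs_deriv_deriv_deriv_pow_le hA0 m x).trans
    (mul_le_mul_of_nonneg_right hconst (shiftedGudermannian.deriv_pow_nonneg hA0.le m x))

/-- Third-derivative bound for powers of `φ(x) = 2A arctan(e^{x/A})`: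
`|(φ^m)'''| ≤ 5m²A⁻²(φ^m)'`, and for any `β > 0`, `m ≥ 1`, taking `A` large enough
gives `|(φ^m)'''| ≤ 2⁻⁹ β (φ^m)'`. -/
theorem stmt_11 :
    (∀ A : ℝ, 1 ≤ A → ∀ m : ℕ, 1 ≤ m → ∀ x : ℝ,
      |deriv (deriv (deriv
          (fun y : ℝ => (2 * A * Real.arctan (Real.exp (y / A))) ^ m))) x|
        ≤ 5 * (m : ℝ) ^ 2 / A ^ 2 *
          deriv (fun y : ℝ => (2 * A * Real.arctan (Real.exp (y / A))) ^ m) x) ∧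
    (∀ β : ℝ, 0 < β → ∀ m : ℕ, 1 ≤ m → ∃ A₀ : ℝ, 1 ≤ A₀ ∧
      ∀ A : ℝ, A₀ ≤ A → ∀ x : ℝ,
      |deriv (deriv (deriv
          (fun y : ℝ => (2 * A * Real.arctan (Real.exp (y / A))) ^ m))) x|
        ≤ (2:ℝ) ^ (-9 : ℤ) * β *
          deriv (fun y : ℝ => (2 * A * Real.arctan (Real.exp (y / A))) ^ m) x) := by
  refine ⟨fun A hA m _ x ↦ ?_, fun β hβ m _ ↦ (stmt_11_general m).2 _ (by positivity)⟩
  have h := (stmt_11_general m).1 A (one_pos.trans_le hA) x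
  rw [mul_div_assoc, mul_assoc]
  exact h.trans (le_mul_of_one_le_left ((abs_nonneg _).trans h) (by norm_num))
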